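/- Let p be an odd prime, m ≥ 1, α = 1 + kp^m with p ∤ k, and J the group of order p^{7m} with presentation ⟨A,B | A^{[A,B]} = A^α, B^{[B,A]} = B^α, A^{p^{3m}} = 1, B^{p^{3m}} = 1⟩, with C = [A,B]. Then for every u ∈ Z_2(J) = ⟨A^{p^{2m}}, C^{p^m}⟩, one has (Au)^{p^m} = A^{p^m} and (Bu)^{p^m} = B^{p^m}. -/

import Mathlib

/-- Relators of the Macdonald group `J(α)`:
`A^{[A,B]} = A^α`, `B^{[B,A]} = B^α`, `A^{p^{3m}} = 1`, `B^{p^{3m}} = 1`,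
with the convention `[A,B] = A⁻¹B⁻¹AB` and `x^y = y⁻¹xy`. -/
def jRels (p m : ℕ) (α : ℤ) : Set (FreeGroup (Fin 2)) :=
  let A : FreeGroup (Fin 2) := FreeGroup.of 0
  let B : FreeGroup (Fin 2) := FreeGroup.of 1
  let C : FreeGroup (Fin 2) := A⁻¹ * B⁻¹ * A * B
  {(C⁻¹ * A * C) * (A ^ α)⁻¹, (C * B * C⁻¹) * (B ^ α)⁻¹,
    A ^ (p ^ (3 * m)), B ^ (p ^ (3 * m))}

/-- The group `J(α)` of order `p^{7m}`. -/
abbrev JGroup (p m : ℕ) (α : ℤ) := PresentedGroup (jRels p m α)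

/-!
Write `q = p ^ m`, `Z₂` for the second centre and `K` for the normal subgroup generated by `A ^ q`,
`B ^ q` and `C`. If `u ∈ Z₂` and `u ^ q = 1`, then `[u, y]` is central of order dividing the odd
number `q`, hence also dividing `q (q - 1) / 2`, and so `(y u) ^ q = y ^ q`. It remains to see that
`Z₂` has exponent dividing `q`.

Since `Z₂` centralizes `J'`, each `u ∈ Z₂` commutes with `C`. A finite permutation model of `J` in
which `B` commutes with `C`, but `A ^ n` only when `q ∣ n`, together with the automorphism
swapping `A` and `B`, then forces `u ∈ K`, so `u = A ^ (q i) B ^ (q j) C ^ k`. Inside `K` all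
commutators of these factors are central in `K`, and the requirements that `u` commute with `C` and
`A ^ q`, and `[u, A]` with `A` and `B`, make `A ^ (q² i)`, `B ^ (q² j)`, `C ^ (q² i)` and
`C ^ (q k)` trivial; then the three factors of `u` commute and `u ^ q = 1`.
-/

theorem zpow_eq_zpow_of_dvd_sub {G : Type*} [Group G] {a : G} {N m n : ℤ} (ha : a ^ N = 1)
    (hmn : N ∣ m - n) : a ^ m = a ^ n :=
  orderOf_dvd_sub_iff_zpow_eq_zpow.mp ((orderOf_dvd_iff_zpow_eq_one.mpr ha).trans hmn)

theorem zpow_mem_of_isCoprime {G : Type*} [Group G] {H : Subgroup G} {a : G} {k N n : ℤ}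
    (hkN : IsCoprime k N) (hN : a ^ (N * n) ∈ H) (hk : a ^ (k * n) ∈ H) : a ^ n ∈ H := by
  obtain ⟨s, t, hst⟩ := hkN
  have hn : a ^ n = (a ^ (k * n)) ^ s * (a ^ (N * n)) ^ t := by
    rw [← zpow_mul, ← zpow_mul, ← zpow_add]
    congr 1
    linear_combination -n * hst
  rw [hn]
  exact H.mul_mem (H.zpow_mem hk s) (H.zpow_mem hN t)

theorem geom_sum_one_add {R : Type*} [CommRing R] (x : R) (n : ℕ) :
    ∃ e, ∑ l ∈ Finset.range n, (1 + x) ^ l = n + n.choose 2 * x + e * x ^ 2 := by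
  induction n with
  | zero => exact ⟨0, by simp⟩
  | succ n ih =>
    obtain ⟨e, he⟩ := ih
    refine ⟨n.choose 2 + e * (1 + x), ?_⟩
    rw [geom_sum_succ, he, Nat.choose_succ_succ' n 1, Nat.choose_one_right]
    push_cast
    ring

theorem dvd_choose_two_of_odd {n : ℕ} (hn : Odd n) : n ∣ n.choose 2 := by
  obtain ⟨k, rfl⟩ := hn
  exact ⟨k, by rw [Nat.choose_two_right, Nat.add_sub_cancel, mul_left_comm,
    Nat.mul_div_cancel_left _ two_pos, mul_comm]⟩

theorem geom_sum_one_add_mul_self {q : ℕ} (hq : Odd q) (κ : ℤ) :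
    ∃ t, ∑ l ∈ Finset.range q, (1 + κ * q) ^ l = q + (q : ℤ) ^ 2 * t := by
  obtain ⟨e, he⟩ := geom_sum_one_add (κ * q : ℤ) q
  obtain ⟨r, hr⟩ := dvd_choose_two_of_odd hq
  refine ⟨κ * r + e * κ ^ 2, ?_⟩
  rw [he, hr]
  push_cast
  ring

/-- The pair `y`, `x` generates a group of class at most two in which `[y, x] = y⁻¹x⁻¹yx` is `z`. -/
structure IsCentralCommutator {G : Type*} [Group G] (y x z : G) : Prop where
  mul_eq : y * x = x * y * z
  commute_left : Commute y z
  commute_right : Commute x z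

namespace IsCentralCommutator

variable {G : Type*} [Group G] {x y z : G}

theorem symm (h : IsCentralCommutator y x z) : IsCentralCommutator x y z⁻¹ where
  mul_eq := by rw [h.mul_eq, mul_inv_cancel_right]
  commute_left := h.commute_right.inv_right
  commute_right := h.commute_left.inv_right

theorem zpow_left (h : IsCentralCommutator y x z) (n : ℤ) :
    IsCentralCommutator (y ^ n) x (z ^ n) where
  mul_eq := by
    have hconj : SemiconjBy x (y * z) y := by
      rw [SemiconjBy, h.mul_eq, ← mul_assoc]
    rw [mul_assoc, ← h.commute_left.mul_zpow, (hconj.zpow_right n).eq]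
  commute_left := h.commute_left.zpow_zpow n n
  commute_right := h.commute_right.zpow_right n

theorem zpow_zpow (h : IsCentralCommutator y x z) (n k : ℤ) :
    IsCentralCommutator (y ^ n) (x ^ k) (z ^ (n * k)) := by
  have h' := ((h.zpow_left n).symm.zpow_left k).symm
  rwa [inv_zpow, inv_inv, ← zpow_mul] at h'

theorem mul_left {y₁ y₂ z₁ z₂ : G} (h₁ : IsCentralCommutator y₁ x z₁)
    (h₂ : IsCentralCommutator y₂ x z₂) (h₁₂ : Commute y₁ z₂) (h₂₁ : Commute y₂ z₁) :
    IsCentralCommutator (y₁ * y₂) x (z₁ * z₂) where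
  mul_eq := by
    rw [mul_assoc, h₂.mul_eq, ← mul_assoc, ← mul_assoc, h₁.mul_eq]
    simp only [mul_assoc, h₂₁.symm.left_comm]
  commute_left := (h₁.commute_left.mul_right h₁₂).mul_left (h₂₁.mul_right h₂.commute_left)
  commute_right := h₁.commute_right.mul_right h₂.commute_right

theorem semiconjBy (h : IsCentralCommutator y x z) : SemiconjBy y x (x * z) := by
  rw [SemiconjBy, h.mul_eq, mul_assoc, mul_assoc, h.commute_left.eq]

theorem commute_iff (h : IsCentralCommutator y x z) : Commute y x ↔ z = 1 := by
  rw [commute_iff_eq, h.mul_eq, mul_eq_left]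

theorem mul_pow (h : IsCentralCommutator y x z) (n : ℕ) :
    (x * y) ^ n = x ^ n * y ^ n * z ^ n.choose 2 := by
  induction n with
  | zero => simp
  | succ n ih =>
    have hyx : y ^ n * x = x * y ^ n * z ^ n := by
      simpa only [zpow_natCast] using (h.zpow_left n).mul_eq
    have hzy : Commute (z ^ n) y := (h.commute_left.pow_right n).symm
    have hz : Commute (z ^ n.choose 2) (x * y) :=
      ((h.commute_right.mul_left h.commute_left).pow_right _).symm
    calc (x * y) ^ (n + 1) = x ^ n * (y ^ n * x) * y * z ^ n.choose 2 := by
          rw [pow_succ, ih, mul_assoc, hz.eq]; simp only [mul_assoc]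
      _ = x ^ n * x * (y ^ n * y) * (z ^ n * z ^ n.choose 2) := by
          rw [hyx]; simp only [mul_assoc, hzy.left_comm]
      _ = x ^ (n + 1) * y ^ (n + 1) * z ^ (n + 1).choose 2 := by
          rw [← pow_succ, ← pow_succ, ← pow_add, Nat.choose_succ_succ' n 1, Nat.choose_one_right]

theorem mul_pow_of_odd (h : IsCentralCommutator y x z) {n : ℕ} (hn : Odd n) (hz : z ^ n = 1) :
    (x * y) ^ n = x ^ n * y ^ n := by
  obtain ⟨r, hr⟩ := dvd_choose_two_of_odd hn
  rw [h.mul_pow, hr, pow_mul, hz, one_pow, mul_one]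

theorem mul_zpow (h : IsCentralCommutator y x z) (hz : Odd (orderOf z)) {k : ℤ}
    (hk : z ^ k = 1) : (x * y) ^ k = x ^ k * y ^ k := by
  obtain ⟨t, rfl⟩ := orderOf_dvd_iff_zpow_eq_one.mpr hk
  have hpow : (x * y) ^ orderOf z = x ^ orderOf z * y ^ orderOf z :=
    h.mul_pow_of_odd hz (pow_orderOf_eq_one z)
  have hcomm : Commute (x ^ orderOf z) (y ^ orderOf z) := by
    have h' := h.zpow_zpow (orderOf z) (orderOf z)
    rw [← Nat.cast_mul, zpow_natCast, zpow_natCast, zpow_natCast, pow_mul, pow_orderOf_eq_one,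
      one_pow] at h'
    exact (h'.commute_iff.mpr rfl).symm
  rw [zpow_mul, zpow_mul, zpow_mul]
  simp only [zpow_natCast]
  rw [hpow, hcomm.mul_zpow]

end IsCentralCommutator

section ClassTwo

open scoped commutatorElement

variable {G : Type*} [Group G]

theorem exists_isCentralCommutator_of_mem_upperCentralSeries_two {u : G}
    (hu : u ∈ Subgroup.upperCentralSeries G 2) (g : G) :
    ∃ z ∈ Subgroup.center G, IsCentralCommutator u g z := by
  have hz : ⁅u⁻¹, g⁻¹⁆ ∈ Subgroup.center G := by
    rw [← Subgroup.upperCentralSeries_one]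
    exact Subgroup.mem_upperCentralSeries_succ_iff.mp (inv_mem hu) g⁻¹
  refine ⟨_, hz, ?_, Subgroup.mem_center_iff.mp hz u, Subgroup.mem_center_iff.mp hz g⟩
  rw [commutatorElement_def]
  group

theorem mul_pow_of_mem_upperCentralSeries_two {u : G}
    (hu : u ∈ Subgroup.upperCentralSeries G 2) {n : ℕ} (hn : Odd n) (hun : u ^ n = 1) (g : G) :
    (g * u) ^ n = g ^ n := by
  obtain ⟨z, -, hz⟩ := exists_isCentralCommutator_of_mem_upperCentralSeries_two hu g
  have hzn : z ^ n = 1 := by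
    have hpow := hz.zpow_left n
    simp only [zpow_natCast, hun] at hpow
    exact hpow.commute_iff.mp (Commute.one_left g)
  rw [hz.mul_pow_of_odd hn hzn, hun, mul_one]

theorem upperCentralSeries_two_le_centralizer_commutator :
    Subgroup.upperCentralSeries G 2 ≤ Subgroup.centralizer (commutator G : Set G) := by
  have hbot : ⁅⁅Subgroup.upperCentralSeries G 2, (⊤ : Subgroup G)⁆, (⊤ : Subgroup G)⁆ = ⊥ := by
    rw [Subgroup.commutator_top_right_eq_bot_iff_le_center, ← Subgroup.upperCentralSeries_one]
    exact Subgroup.commutator_upperCentralSeries_top_le G 1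
  rw [← Subgroup.commutator_eq_bot_iff_le_centralizer, Subgroup.commutator_comm]
  refine Subgroup.commutator_commutator_eq_bot_of_rotate ?_ hbot
  rwa [Subgroup.commutator_comm ⊤]

theorem exists_zpow_mul_zpow_mul_of_closure_pair {a b : G}
    (hab : Subgroup.closure {a, b} = ⊤) (u : G) :
    ∃ i j : ℤ, ∃ x ∈ commutator G, u = a ^ i * b ^ j * x := by
  have hmem :
      Abelianization.of u ∈ Subgroup.closure {Abelianization.of a, Abelianization.of b} := by
    rw [← Set.image_pair, ← MonoidHom.map_closure, hab]
    exact Subgroup.mem_map_of_mem _ (Subgroup.mem_top u)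
  obtain ⟨i, j, hij⟩ := Subgroup.mem_closure_pair.mp hmem
  refine ⟨i, j, (a ^ i * b ^ j)⁻¹ * u, ?_, (mul_inv_cancel_left _ _).symm⟩
  rw [← Abelianization.ker_of G, MonoidHom.mem_ker]
  simp only [map_mul, map_inv, map_zpow, hij, inv_mul_cancel]

theorem inv_mul_inv_mul_mul_mem_commutator (a b : G) : a⁻¹ * b⁻¹ * a * b ∈ commutator G := by
  have hmem := Subgroup.commutator_mem_commutator (Subgroup.mem_top a⁻¹) (Subgroup.mem_top b⁻¹)
  rwa [commutatorElement_def, inv_inv, inv_inv, ← commutator_def] at hmem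

theorem commutator_le_of_closure_pair {a b : G} (hab : Subgroup.closure {a, b} = ⊤)
    {K : Subgroup G} [K.Normal] (hK : a⁻¹ * b⁻¹ * a * b ∈ K) : commutator G ≤ K := by
  have hcomm : QuotientGroup.mk' K a * QuotientGroup.mk' K b =
      QuotientGroup.mk' K b * QuotientGroup.mk' K a := by
    rw [← map_mul, ← map_mul, eq_comm, QuotientGroup.mk'_eq_mk']
    exact ⟨_, hK, by group⟩
  have htop : Subgroup.closure (QuotientGroup.mk' K '' {a, b}) = ⊤ := by
    rw [← MonoidHom.map_closure, hab, ← MonoidHom.range_eq_map, QuotientGroup.range_mk']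
  have hclosure : IsMulCommutative (Subgroup.closure (QuotientGroup.mk' K '' {a, b})) := by
    refine Subgroup.isMulCommutative_closure ?_
    rw [Set.image_pair]
    rintro x (rfl | rfl) y (rfl | rfl)
    exacts [rfl, hcomm, hcomm.symm, rfl]
  rw [htop] at hclosure
  refine Subgroup.Normal.quotient_commutative_iff_commutator_le.mp ⟨⟨fun x y => ?_⟩⟩
  exact congrArg Subtype.val (hclosure.is_comm.comm ⟨x, Subgroup.mem_top x⟩ ⟨y, Subgroup.mem_top y⟩)

theorem mem_normalizer_closure_of_isOfFinOrder {g : G} {S : Set G} (hg : IsOfFinOrder g)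
    (hS : ∀ x ∈ S, g⁻¹ * x * g ∈ Subgroup.closure S) :
    g ∈ Subgroup.normalizer (Subgroup.closure S : Set G) := by
  have hconj : Subgroup.closure S ≤ (Subgroup.closure S).comap (MulAut.conj g⁻¹).toMonoidHom := by
    rw [Subgroup.closure_le]
    intro x hx
    simpa using hS x hx
  have hpow : ∀ n : ℕ, ∀ x ∈ Subgroup.closure S, (g ^ n)⁻¹ * x * g ^ n ∈ Subgroup.closure S := by
    intro n x hx
    induction n with
    | zero => simpa using hx
    | succ n ih => simpa [pow_succ, mul_assoc] using hconj ih
  obtain ⟨n, hn⟩ := hg.mem_powers_iff_mem_zpowers.mpr (inv_mem (Subgroup.mem_zpowers g))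
  refine Subgroup.mem_normalizer_iff''.mpr fun x => ⟨fun hx => ?_, fun hx => ?_⟩
  · simpa only [pow_one] using hpow 1 x hx
  · have hx' := hpow n _ hx
    rw [show g ^ n = g⁻¹ from hn] at hx'
    simpa [mul_assoc] using hx'

end ClassTwo

/-- The relations of the Macdonald group `J(1 + κq)`, in an arbitrary group: `C = [A, B]`,
`A ^ C = A ^ (1 + κq)`, `B ^ C⁻¹ = B ^ (1 + κq)` and `A ^ q³ = B ^ q³ = 1`, where `x ^ y` stands for
`y⁻¹xy`. -/
structure IsMacdonaldTriple {G : Type*} [Group G] (q : ℕ) (κ : ℤ) (A B C : G) : Prop where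
  conj_B_A : SemiconjBy B (A * C) A
  conj_C_A : SemiconjBy C (A ^ (1 + κ * q)) A
  conj_C_B : SemiconjBy C B (B ^ (1 + κ * q))
  pow_A : A ^ q ^ 3 = 1
  pow_B : B ^ q ^ 3 = 1

namespace IsMacdonaldTriple

variable {G : Type*} [Group G] {q : ℕ} {κ : ℤ} {A B C : G}

theorem symm (h : IsMacdonaldTriple q κ A B C) : IsMacdonaldTriple q κ B A C⁻¹ where
  conj_B_A := by
    have hBA : B * A * C = A * B := by rw [mul_assoc, h.conj_B_A.eq]
    rw [SemiconjBy, ← mul_assoc, ← hBA, mul_inv_cancel_right]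
  conj_C_A := h.conj_C_B.inv_symm_left
  conj_C_B := h.conj_C_A.inv_symm_left
  pow_A := h.pow_B
  pow_B := h.pow_A

theorem eq_commutator (h : IsMacdonaldTriple q κ A B C) : C = A⁻¹ * B⁻¹ * A * B := by
  rw [mul_assoc _ A, ← h.conj_B_A.eq]
  group

theorem map_C {H : Type*} [Group H] {C' : H} {φ : G →* H} (h : IsMacdonaldTriple q κ A B C)
    (h' : IsMacdonaldTriple q κ (φ A) (φ B) C') : φ C = C' := by
  rw [h.eq_commutator, h'.eq_commutator, map_mul, map_mul, map_mul, map_inv, map_inv]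

theorem zpow_A_congr (h : IsMacdonaldTriple q κ A B C) {m n : ℤ} (hmn : (q : ℤ) ^ 3 ∣ m - n) :
    A ^ m = A ^ n := by
  refine zpow_eq_zpow_of_dvd_sub ?_ hmn
  exact_mod_cast h.pow_A

theorem zpow_A_eq_one (h : IsMacdonaldTriple q κ A B C) {n : ℤ} (hn : (q : ℤ) ^ 3 ∣ n) :
    A ^ n = 1 := by
  rw [h.zpow_A_congr (n := 0) (by rwa [sub_zero]), zpow_zero]

theorem semiconjBy_zpow_A (h : IsMacdonaldTriple q κ A B C) (n : ℤ) :
    SemiconjBy C (A ^ ((1 + κ * q) * n)) (A ^ n) := by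
  simpa only [zpow_mul] using h.conj_C_A.zpow_right n

theorem commute_zpow_sq_mul_A_C (h : IsMacdonaldTriple q κ A B C) (n : ℤ) :
    Commute (A ^ ((q : ℤ) ^ 2 * n)) C := by
  have hconj := h.semiconjBy_zpow_A (q ^ 2 * n)
  rw [h.zpow_A_congr (n := q ^ 2 * n) ⟨κ * n, by ring⟩] at hconj
  exact Commute.symm hconj

theorem commute_zpow_sq_mul_B_C (h : IsMacdonaldTriple q κ A B C) (n : ℤ) :
    Commute (B ^ ((q : ℤ) ^ 2 * n)) C :=
  Commute.inv_right_iff.mp (h.symm.commute_zpow_sq_mul_A_C n)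

theorem isCentralCommutator_zpow_mul_A_zpow_C (h : IsMacdonaldTriple q κ A B C) (n k : ℤ) :
    IsCentralCommutator (A ^ (q * n)) (C ^ k) (A ^ ((q : ℤ) ^ 2 * (κ * n * k))) := by
  have hC : IsCentralCommutator (A ^ (q * n)) C (A ^ ((q : ℤ) ^ 2 * (κ * n))) :=
    { mul_eq := by
        rw [mul_assoc, ← zpow_add, ← (h.semiconjBy_zpow_A (q * n)).eq]
        ring_nf
      commute_left := Commute.zpow_zpow_self A _ _
      commute_right := (h.commute_zpow_sq_mul_A_C (κ * n)).symm }
  simpa only [zpow_one, one_mul, ← zpow_mul, mul_assoc] using hC.zpow_zpow 1 k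

theorem isCentralCommutator_zpow_mul_B_zpow_C (h : IsMacdonaldTriple q κ A B C) (n k : ℤ) :
    IsCentralCommutator (B ^ (q * n)) (C ^ k) (B ^ (-((q : ℤ) ^ 2 * (κ * n * k)))) := by
  simpa only [inv_zpow', mul_neg, neg_neg] using h.symm.isCentralCommutator_zpow_mul_A_zpow_C n (-k)

theorem semiconjBy_pow_C (h : IsMacdonaldTriple q κ A B C) (n : ℤ) (l : ℕ) :
    SemiconjBy (C ^ l) (A ^ ((1 + κ * q) ^ l * n)) (A ^ n) := by
  induction l with
  | zero => simp
  | succ l ih =>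
    have hl := h.semiconjBy_zpow_A ((1 + κ * q) ^ l * n)
    rw [← mul_assoc, ← pow_succ'] at hl
    rw [pow_succ]
    exact ih.mul_left hl

theorem isCentralCommutator_zpow_A_zpow_mul_C (h : IsMacdonaldTriple q κ A B C) (hq : Odd q)
    (n k : ℤ) :
    IsCentralCommutator (A ^ n) (C ^ (q * k)) (A ^ ((q : ℤ) ^ 2 * (κ * n * k))) := by
  obtain ⟨t, ht⟩ := geom_sum_one_add_mul_self hq κ
  have hpow : ((1 + κ * q) ^ q : ℤ) = 1 + κ * q ^ 2 + q ^ 3 * (κ * t) := by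
    linear_combination κ * q * ht - mul_geom_sum (1 + κ * q : ℤ) q
  have hCq : IsCentralCommutator A (C ^ q) (A ^ ((q : ℤ) ^ 2 * κ)) :=
    { mul_eq := by
        have hconj := h.semiconjBy_pow_C 1 q
        rw [h.zpow_A_congr (n := 1 + q ^ 2 * κ) ⟨κ * t, by rw [hpow]; ring⟩, zpow_one] at hconj
        rw [← hconj.eq, zpow_one_add, mul_assoc]
      commute_left := Commute.self_zpow A _
      commute_right := (h.commute_zpow_sq_mul_A_C κ).symm.pow_left q }
  have hnk := hCq.zpow_zpow n k
  rwa [← zpow_natCast, ← zpow_mul, ← zpow_mul, mul_assoc, ← mul_assoc κ] at hnk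

theorem isCentralCommutator_zpow_B_zpow_mul_C (h : IsMacdonaldTriple q κ A B C) (hq : Odd q)
    (n k : ℤ) :
    IsCentralCommutator (B ^ n) (C ^ (q * k)) (B ^ (-((q : ℤ) ^ 2 * (κ * n * k)))) := by
  simpa only [inv_zpow', mul_neg, neg_neg] using
    h.symm.isCentralCommutator_zpow_A_zpow_mul_C hq n (-k)

theorem commute_zpow_A_zpow_sq_mul_C (h : IsMacdonaldTriple q κ A B C) (hq : Odd q) (n k : ℤ) :
    Commute (A ^ n) (C ^ ((q : ℤ) ^ 2 * k)) := by
  have hcomm := h.isCentralCommutator_zpow_A_zpow_mul_C hq n (q * k)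
  rw [← mul_assoc, ← pow_two] at hcomm
  exact hcomm.commute_iff.mpr (h.zpow_A_eq_one ⟨κ * n * k, by ring⟩)

theorem commute_zpow_B_zpow_sq_mul_C (h : IsMacdonaldTriple q κ A B C) (hq : Odd q) (n k : ℤ) :
    Commute (B ^ n) (C ^ ((q : ℤ) ^ 2 * k)) := by
  simpa only [inv_zpow', mul_neg, neg_neg] using h.symm.commute_zpow_A_zpow_sq_mul_C hq n (-k)

theorem mul_pow_eq_pow_mul_zpow (h : IsMacdonaldTriple q κ A B C) (n : ℕ) :
    (A * C) ^ n = C ^ n * A ^ ((1 + κ * q) * ∑ l ∈ Finset.range n, (1 + κ * q) ^ l) := by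
  induction n with
  | zero => simp
  | succ n ih =>
    set S := ∑ l ∈ Finset.range n, (1 + κ * q) ^ l
    have hS : ∑ l ∈ Finset.range (n + 1), (1 + κ * q) ^ l = (1 + κ * q) * S + 1 := geom_sum_succ
    rw [pow_succ, ih, mul_assoc, ← mul_assoc _ A, ← zpow_add_one,
      ← (h.semiconjBy_zpow_A _).eq, ← mul_assoc, ← pow_succ, hS]

theorem exists_semiconjBy_B_zpow_A (h : IsMacdonaldTriple q κ A B C) (hq : Odd q) :
    ∃ s : ℤ, ∀ n : ℤ,
      SemiconjBy B (A ^ (q * n) * A ^ ((q : ℤ) ^ 2 * (s * n)) * C ^ (q * n)) (A ^ (q * n)) := by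
  obtain ⟨t, ht⟩ := geom_sum_one_add_mul_self hq κ
  have hcomm : Commute (A ^ (q + (q : ℤ) ^ 2 * (t + κ))) (C ^ q) := by
    have hA := h.isCentralCommutator_zpow_A_zpow_mul_C hq (q + (q : ℤ) ^ 2 * (t + κ)) 1
    rw [mul_one, zpow_natCast] at hA
    exact hA.commute_iff.mpr (h.zpow_A_eq_one ⟨κ * (1 + q * (t + κ)), by ring⟩)
  have hAC : (A * C) ^ q = A ^ (q + (q : ℤ) ^ 2 * (t + κ)) * C ^ q := by
    rw [h.mul_pow_eq_pow_mul_zpow, ht, hcomm.eq]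
    congr 1
    exact h.zpow_A_congr ⟨κ * t, by ring⟩
  refine ⟨t + κ, fun n => ?_⟩
  have hconj := h.conj_B_A.zpow_right (q * n)
  rw [zpow_mul (A * C), zpow_natCast, hAC, hcomm.mul_zpow, ← zpow_natCast, ← zpow_mul,
    ← zpow_mul, add_mul, zpow_add, mul_assoc (_ ^ 2)] at hconj
  exact hconj

theorem isCentralCommutator_zpow_sq_mul_A_zpow_B (h : IsMacdonaldTriple q κ A B C) (hq : Odd q)
    (n k : ℤ) :
    IsCentralCommutator (A ^ ((q : ℤ) ^ 2 * n)) (B ^ k) (C ^ ((q : ℤ) ^ 2 * (n * k))) := by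
  obtain ⟨s, hs⟩ := h.exists_semiconjBy_B_zpow_A hq
  have hB : IsCentralCommutator (A ^ ((q : ℤ) ^ 2 * n)) B (C ^ ((q : ℤ) ^ 2 * n)) :=
    { mul_eq := by
        have hconj := hs (q * n)
        rw [h.zpow_A_eq_one (n := q ^ 2 * (s * (q * n))) ⟨s * n, by ring⟩, mul_one,
          ← mul_assoc, ← pow_two] at hconj
        rw [← hconj.eq, mul_assoc]
      commute_left := h.commute_zpow_A_zpow_sq_mul_C hq _ n
      commute_right := by simpa only [zpow_one] using h.commute_zpow_B_zpow_sq_mul_C hq 1 n }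
  simpa only [zpow_one, one_mul, ← zpow_mul, mul_assoc] using hB.zpow_zpow 1 k

theorem isCentralCommutator_zpow_sq_mul_B_zpow_A (h : IsMacdonaldTriple q κ A B C) (hq : Odd q)
    (n k : ℤ) :
    IsCentralCommutator (B ^ ((q : ℤ) ^ 2 * n)) (A ^ k) (C ^ (-((q : ℤ) ^ 2 * (n * k)))) := by
  simpa only [inv_zpow'] using h.symm.isCentralCommutator_zpow_sq_mul_A_zpow_B hq n k

theorem zpow_C_eq_one (h : IsMacdonaldTriple q κ A B C) (hq : Odd q) {n : ℤ}
    (hn : (q : ℤ) ^ 3 ∣ n) : C ^ n = 1 := by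
  obtain ⟨k, rfl⟩ := hn
  have hB := h.isCentralCommutator_zpow_sq_mul_A_zpow_B hq (q * k) 1
  rw [h.zpow_A_eq_one ⟨k, by ring⟩, mul_one, ← mul_assoc, ← pow_succ] at hB
  exact hB.commute_iff.mp (Commute.one_left _)

theorem commute_zpow_sq_mul_A_zpow_mul_B (h : IsMacdonaldTriple q κ A B C) (hq : Odd q)
    (n k : ℤ) : Commute (A ^ ((q : ℤ) ^ 2 * n)) (B ^ (q * k)) :=
  (h.isCentralCommutator_zpow_sq_mul_A_zpow_B hq n _).commute_iff.mpr
    (h.zpow_C_eq_one hq ⟨n * k, by ring⟩)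

theorem exists_semiconjBy_zpow_B_A (h : IsMacdonaldTriple q κ A B C) (hq : Odd q) :
    ∃ D, SemiconjBy (B ^ (q : ℤ)) (A * D) A ∧ (A * D) ^ q = A ^ q * C ^ ((q : ℤ) ^ 2) := by
  obtain ⟨s, hs⟩ := h.symm.exists_semiconjBy_B_zpow_A hq
  have hconj := hs 1
  simp only [mul_one, inv_zpow'] at hconj
  have hCB : Commute (C ^ (q : ℤ)) (B ^ (-((q : ℤ) ^ 2 * s))) := by
    simpa only [mul_neg] using ((h.commute_zpow_sq_mul_B_C (-s)).zpow_right q).symm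
  have hAC := (h.commute_zpow_A_zpow_sq_mul_C hq ((q : ℤ) ^ 2 * κ) s).inv_left
  have hDA : IsCentralCommutator (C ^ (q : ℤ) * B ^ (-((q : ℤ) ^ 2 * s))) A
      ((A ^ ((q : ℤ) ^ 2 * κ))⁻¹ * C ^ ((q : ℤ) ^ 2 * s)) := by
    have hC := (h.isCentralCommutator_zpow_A_zpow_mul_C hq 1 1).symm
    have hB := h.isCentralCommutator_zpow_sq_mul_B_zpow_A hq (-s) 1
    have hAB := (h.commute_zpow_sq_mul_A_zpow_mul_B hq κ (-(q * s))).symm.inv_right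
    rw [mul_neg, ← mul_assoc, ← pow_two] at hAB
    simp only [mul_one, zpow_one, mul_neg, neg_neg] at hC hB
    exact hC.mul_left hB (Commute.zpow_zpow_self C _ _) hAB
  refine ⟨_, ?_, hDA.mul_pow_of_odd hq ?_ |>.trans ?_⟩
  · rw [SemiconjBy, ← mul_assoc, ← hconj.eq, zpow_neg, zpow_neg]
    group
  · rw [hAC.mul_pow, inv_pow, ← zpow_natCast, ← zpow_natCast, ← zpow_mul, ← zpow_mul,
      h.zpow_A_eq_one ⟨κ, by ring⟩, h.zpow_C_eq_one hq ⟨s, by ring⟩, inv_one, one_mul]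
  · rw [hCB.mul_pow, ← zpow_natCast (B ^ _), ← zpow_natCast (C ^ _), ← zpow_mul, ← zpow_mul,
      h.symm.zpow_A_eq_one ⟨-s, by ring⟩, mul_one, pow_two]

theorem isCentralCommutator_zpow_mul_A_zpow_mul_B (h : IsMacdonaldTriple q κ A B C) (hq : Odd q)
    (i j : ℤ) :
    IsCentralCommutator (A ^ (q * i)) (B ^ (q * j)) (C ^ ((q : ℤ) ^ 2 * (i * j))) := by
  obtain ⟨D, hconj, hD⟩ := h.exists_semiconjBy_zpow_B_A hq
  have hAB : IsCentralCommutator (A ^ (q : ℤ)) (B ^ (q : ℤ)) (C ^ ((q : ℤ) ^ 2)) :=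
    { mul_eq := by
        rw [mul_assoc, zpow_natCast A, ← (hconj.pow_right q).eq, hD]
      commute_left := by simpa only [mul_one] using h.commute_zpow_A_zpow_sq_mul_C hq q 1
      commute_right := by simpa only [mul_one] using h.commute_zpow_B_zpow_sq_mul_C hq q 1 }
  simpa only [← zpow_mul] using hAB.zpow_zpow i j

theorem semiconjBy_A_C (h : IsMacdonaldTriple q κ A B C) :
    SemiconjBy A (C * A ^ (q * -κ)) C := by
  rw [SemiconjBy, ← mul_assoc, ← h.conj_C_A.eq, mul_assoc, ← zpow_add, mul_neg, mul_comm κ,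
    add_neg_cancel_right, zpow_one]

/-- The subgroup generated by `A ^ q`, `B ^ q` and `C`. When `A` and `B` generate the group it is
the normal subgroup `G ^ q [G, G]`, and for `G = J(α)` its index is `q²`. -/
def macdonaldSubgroup (q : ℕ) (A B C : G) : Subgroup G :=
  Subgroup.closure {A ^ q, B ^ q, C}

theorem zpow_A_mem (n : ℤ) : A ^ (q * n) ∈ macdonaldSubgroup q A B C := by
  rw [zpow_mul, zpow_natCast]
  exact zpow_mem (Subgroup.subset_closure (by simp)) n

theorem zpow_B_mem (n : ℤ) : B ^ (q * n) ∈ macdonaldSubgroup q A B C := by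
  rw [zpow_mul, zpow_natCast]
  exact zpow_mem (Subgroup.subset_closure (by simp)) n

theorem C_mem : C ∈ macdonaldSubgroup q A B C :=
  Subgroup.subset_closure (by simp)

theorem macdonaldSubgroup_symm :
    macdonaldSubgroup q B A C⁻¹ = macdonaldSubgroup q A B C := by
  have hle : ∀ A B C : G, macdonaldSubgroup q B A C⁻¹ ≤ macdonaldSubgroup q A B C := by
    intro A B C
    rw [macdonaldSubgroup, Subgroup.closure_le]
    rintro x (rfl | rfl | rfl)
    · exact Subgroup.subset_closure (by simp)
    · exact Subgroup.subset_closure (by simp)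
    · exact inv_mem C_mem
  refine le_antisymm (hle A B C) ?_
  simpa only [inv_inv] using hle B A C⁻¹

theorem semiconjBy_zpow_C_zpow_A (h : IsMacdonaldTriple q κ A B C) (n i : ℤ) :
    SemiconjBy (C ^ n) (A ^ (q * i)) (A ^ (q * (i - q * (κ * i * n)))) := by
  have hconj := (h.isCentralCommutator_zpow_mul_A_zpow_C i n).symm.semiconjBy
  rwa [← zpow_neg, ← zpow_add,
    show q * i + -((q : ℤ) ^ 2 * (κ * i * n)) = q * (i - q * (κ * i * n)) by ring] at hconj

theorem exists_of_mem_macdonaldSubgroup (h : IsMacdonaldTriple q κ A B C) (hq : Odd q) {x : G}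
    (hx : x ∈ macdonaldSubgroup q A B C) :
    ∃ i j k : ℤ, x = A ^ (q * i) * B ^ (q * j) * C ^ k := by
  have hA : ∀ n i j k : ℤ, ∃ i' j' k' : ℤ, A ^ (q * n) * (A ^ (q * i) * B ^ (q * j) * C ^ k) =
      A ^ (q * i') * B ^ (q * j') * C ^ k' := fun n i j k =>
    ⟨n + i, j, k, by simp only [mul_add, zpow_add, mul_assoc]⟩
  have hB : ∀ n i j k : ℤ, ∃ i' j' k' : ℤ, B ^ (q * n) * (A ^ (q * i) * B ^ (q * j) * C ^ k) =
      A ^ (q * i') * B ^ (q * j') * C ^ k' := fun n i j k => by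
    have hBA := (h.isCentralCommutator_zpow_mul_A_zpow_mul_B hq i n).symm.mul_eq
    have hBC := (h.commute_zpow_B_zpow_sq_mul_C hq (q * j) (i * n)).symm.inv_left
    refine ⟨i, n + j, -(q ^ 2 * (i * n)) + k, ?_⟩
    rw [← mul_assoc, ← mul_assoc, hBA]
    simp only [mul_add, zpow_add, zpow_neg, mul_assoc, hBC.left_comm]
  have hC : ∀ n i j k : ℤ, ∃ i' j' k' : ℤ, C ^ n * (A ^ (q * i) * B ^ (q * j) * C ^ k) =
      A ^ (q * i') * B ^ (q * j') * C ^ k' := fun n i j k => by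
    have hCA := h.semiconjBy_zpow_C_zpow_A n i
    have hCB := h.symm.semiconjBy_zpow_C_zpow_A (-n) j
    rw [inv_zpow', neg_neg] at hCB
    exact ⟨_, _, n + k, by rw [← mul_assoc, (hCA.mul_right hCB).eq, mul_assoc, ← zpow_add]⟩
  refine Subgroup.closure_induction_left ⟨0, 0, 0, by simp⟩ ?_ ?_ hx
  · rintro _ (rfl | rfl | rfl) _ - ⟨i, j, k, rfl⟩
    · simpa using hA 1 i j k
    · simpa using hB 1 i j k
    · simpa using hC 1 i j k
  · rintro _ (rfl | rfl | rfl) _ - ⟨i, j, k, rfl⟩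
    · simpa using hA (-1) i j k
    · simpa using hB (-1) i j k
    · simpa using hC (-1) i j k

theorem A_mem_normalizer (h : IsMacdonaldTriple q κ A B C) (hq : Odd q) :
    A ∈ Subgroup.normalizer (macdonaldSubgroup q A B C : Set G) := by
  obtain ⟨s, hs⟩ := h.symm.exists_semiconjBy_B_zpow_A hq
  have hA : IsOfFinOrder A :=
    isOfFinOrder_iff_pow_eq_one.mpr ⟨q ^ 3, pow_pos hq.pos 3, h.pow_A⟩
  refine mem_normalizer_closure_of_isOfFinOrder hA ?_
  rintro x (rfl | rfl | rfl)
  · rw [mul_assoc, (Commute.pow_self A q).eq, inv_mul_cancel_left]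
    exact Subgroup.subset_closure (by simp)
  · have hB := hs 1
    simp only [mul_one, zpow_natCast] at hB
    rw [mul_assoc, ← hB.eq, inv_mul_cancel_left]
    refine mul_mem (mul_mem (Subgroup.subset_closure (by simp)) ?_) (pow_mem (inv_mem C_mem) q)
    rw [pow_two, mul_assoc]
    exact zpow_B_mem _
  · rw [mul_assoc, ← h.semiconjBy_A_C.eq, inv_mul_cancel_left]
    exact mul_mem C_mem (zpow_A_mem _)

theorem macdonaldSubgroup_normal (h : IsMacdonaldTriple q κ A B C) (hq : Odd q)
    (hgen : Subgroup.closure {A, B} = ⊤) : (macdonaldSubgroup q A B C).Normal := by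
  rw [← Subgroup.normalizer_eq_top_iff, eq_top_iff, ← hgen, Subgroup.closure_le]
  rintro x (rfl | rfl)
  · exact h.A_mem_normalizer hq
  · rw [← macdonaldSubgroup_symm]
    exact h.symm.A_mem_normalizer hq

theorem commutator_le_macdonaldSubgroup (h : IsMacdonaldTriple q κ A B C) (hq : Odd q)
    (hgen : Subgroup.closure {A, B} = ⊤) : commutator G ≤ macdonaldSubgroup q A B C := by
  have := h.macdonaldSubgroup_normal hq hgen
  exact commutator_le_of_closure_pair hgen (h.eq_commutator ▸ C_mem)

theorem commute_C_and_zpow_A_of_mem_centralizer_commutator (h : IsMacdonaldTriple q κ A B C)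
    (hκ : IsCoprime κ q) {u : G} (hu : u ∈ Subgroup.centralizer (commutator G : Set G)) :
    Commute u C ∧ Commute u (A ^ (q : ℤ)) := by
  have hcomm : ∀ x ∈ commutator G, x ∈ Subgroup.centralizer {u} := fun x hx =>
    Subgroup.mem_centralizer_singleton_iff.mpr (Subgroup.mem_centralizer_iff.mp hu x hx)
  have hC : C ∈ Subgroup.centralizer {u} := by
    rw [h.eq_commutator]
    exact hcomm _ (inv_mul_inv_mul_mul_mem_commutator A B)
  have hAC : A ^ (κ * q) = A⁻¹ * C⁻¹ * A * C := by
    rw [mul_assoc _ A, ← h.conj_C_A.eq, zpow_one_add]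
    group
  have hA : A ^ (q : ℤ) ∈ Subgroup.centralizer {u} := by
    refine zpow_mem_of_isCoprime (hκ.pow_right (n := 2)) ?_ ?_
    · rw [h.zpow_A_eq_one ⟨1, by ring⟩]
      exact one_mem _
    · exact hAC ▸ hcomm _ (inv_mul_inv_mul_mul_mem_commutator A C)
  exact ⟨(Subgroup.mem_centralizer_singleton_iff.mp hC).symm,
    (Subgroup.mem_centralizer_singleton_iff.mp hA).symm⟩

theorem zpow_A_eq_one_of_mul (h : IsMacdonaldTriple q κ A B C) (hκ : IsCoprime κ q) {n : ℤ}
    (hn : A ^ ((q : ℤ) ^ 2 * (κ * n)) = 1) : A ^ ((q : ℤ) ^ 2 * n) = 1 := by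
  rw [← Subgroup.mem_bot] at hn ⊢
  refine zpow_mem_of_isCoprime hκ ?_ (by rwa [mul_left_comm κ])
  exact h.zpow_A_eq_one ⟨n, by ring⟩

theorem zpow_A_eq_zpow_B_of_commute_C (h : IsMacdonaldTriple q κ A B C) (hq : Odd q)
    (hκ : IsCoprime κ q) {i j k : ℤ} (hC : Commute (A ^ (q * i) * B ^ (q * j) * C ^ k) C) :
    A ^ ((q : ℤ) ^ 2 * i) = B ^ ((q : ℤ) ^ 2 * j) := by
  have hABC : Commute (A ^ (q * i) * B ^ (q * j)) (C ^ (1 : ℤ)) := by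
    have hC' := hC.mul_left (((Commute.refl C).zpow_left k).inv_left)
    rwa [mul_inv_cancel_right, ← zpow_one C] at hC'
  have hAQ : Commute (A ^ (q * i)) (B ^ (-((q : ℤ) ^ 2 * (κ * j * 1)))) := by
    rw [zpow_neg]
    exact (h.symm.commute_zpow_sq_mul_A_zpow_mul_B hq _ i).symm.inv_right
  have hPQ : A ^ ((q : ℤ) ^ 2 * (κ * i * 1)) * B ^ (-((q : ℤ) ^ 2 * (κ * j * 1))) = 1 :=
    ((h.isCentralCommutator_zpow_mul_A_zpow_C i 1).mul_left
      (h.isCentralCommutator_zpow_mul_B_zpow_C j 1) hAQ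
      (h.commute_zpow_sq_mul_A_zpow_mul_B hq _ j).symm).commute_iff.mp hABC
  have hzpow : ∀ n : ℤ, (A ^ ((q : ℤ) ^ 2 * i) * B ^ (-((q : ℤ) ^ 2 * j))) ^ n =
      A ^ ((q : ℤ) ^ 2 * i * n) * B ^ (-((q : ℤ) ^ 2 * j) * n) := fun n => by
    have hcomm := h.commute_zpow_sq_mul_A_zpow_mul_B hq i (-(q * j))
    rw [mul_neg, ← mul_assoc, ← pow_two] at hcomm
    rw [hcomm.mul_zpow, ← zpow_mul, ← zpow_mul]
  have hone : A ^ ((q : ℤ) ^ 2 * i) * B ^ (-((q : ℤ) ^ 2 * j)) = 1 := by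
    rw [← zpow_one (_ * _), ← Subgroup.mem_bot]
    refine zpow_mem_of_isCoprime hκ ?_ ?_
    · rw [hzpow, h.zpow_A_eq_one ⟨i, by ring⟩, h.symm.zpow_A_eq_one ⟨-j, by ring⟩, one_mul]
      exact one_mem _
    · rw [hzpow, Subgroup.mem_bot, ← hPQ]
      ring_nf
  rwa [zpow_neg, mul_inv_eq_one] at hone

theorem zpow_eq_one_of_commute_zpow_A (h : IsMacdonaldTriple q κ A B C) (hq : Odd q)
    (hκ : IsCoprime κ q) {i j k : ℤ}
    (hA : Commute (A ^ (q * i) * B ^ (q * j) * C ^ k) (A ^ (q : ℤ)))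
    (hAB : A ^ ((q : ℤ) ^ 2 * i) = B ^ ((q : ℤ) ^ 2 * j)) :
    C ^ ((q : ℤ) ^ 2 * i) = 1 ∧ C ^ ((q : ℤ) ^ 2 * j) = 1 ∧ A ^ ((q : ℤ) ^ 2 * k) = 1 := by
  have hCi : C ^ ((q : ℤ) ^ 2 * i) = 1 := by
    have hPB := h.isCentralCommutator_zpow_sq_mul_A_zpow_B hq i 1
    rw [mul_one, zpow_one] at hPB
    exact hPB.commute_iff.mp (hAB ▸ Commute.zpow_self B _)
  have hCj : C ^ ((q : ℤ) ^ 2 * j) = 1 := by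
    have hQA := h.symm.isCentralCommutator_zpow_sq_mul_A_zpow_B hq j 1
    rw [mul_one, zpow_one, inv_zpow, ← hAB] at hQA
    exact inv_eq_one.mp (hQA.commute_iff.mp (Commute.zpow_self A _))
  have hBA : Commute (B ^ (q * j)) (A ^ (q : ℤ)) := by
    have hAB := h.isCentralCommutator_zpow_mul_A_zpow_mul_B hq 1 j
    rw [one_mul, mul_one] at hAB
    exact (hAB.commute_iff.mpr hCj).symm
  have hAC : Commute (A ^ (q * 1 : ℤ)) (C ^ k) := by
    have hCA := ((Commute.zpow_zpow_self A (q * i) q).mul_left hBA).inv_left.mul_left hA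
    rw [inv_mul_cancel_left] at hCA
    rw [mul_one]
    exact hCA.symm
  have hP := (h.isCentralCommutator_zpow_mul_A_zpow_C 1 k).commute_iff.mp hAC
  rw [mul_one] at hP
  exact ⟨hCi, hCj, h.zpow_A_eq_one_of_mul hκ hP⟩

theorem exists_eq_of_isCentralCommutator_A (h : IsMacdonaldTriple q κ A B C) (hq : Odd q)
    {i j k : ℤ} {z : G} (hz : IsCentralCommutator (A ^ (q * i) * B ^ (q * j) * C ^ k) A z)
    (hk : A ^ ((q : ℤ) ^ 2 * k) = 1) :
    ∃ s : ℤ, z = B ^ ((q : ℤ) ^ 2 * (s * j)) * C ^ (-(q * j)) * A ^ (q * -κ * k) := by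
  obtain ⟨s, hs⟩ := h.symm.exists_semiconjBy_B_zpow_A hq
  have hC : (C * A ^ (q * -κ)) ^ k = C ^ k * A ^ (q * -κ * k) := by
    have hAC := h.isCentralCommutator_zpow_mul_A_zpow_C (-κ) 1
    rw [zpow_one] at hAC
    rw [hAC.mul_zpow, ← zpow_mul]
    · refine hq.of_dvd_nat (orderOf_dvd_of_pow_eq_one ?_)
      rw [← zpow_natCast, ← zpow_mul]
      exact h.zpow_A_eq_one ⟨κ * -κ, by ring⟩
    · rw [← zpow_mul, show (q : ℤ) ^ 2 * (κ * -κ * 1) * k = q ^ 2 * k * -κ ^ 2 by ring,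
        zpow_mul, hk, one_zpow]
  have hAA : SemiconjBy A (A ^ (q * i)) (A ^ (q * i)) := Commute.self_zpow A _
  have hconj := (hAA.mul_right (hs j)).mul_right (h.semiconjBy_A_C.zpow_right k)
  have hcomm : Commute (B ^ ((q : ℤ) ^ 2 * (s * j)) * C ^ (-(q * j))) (C ^ k) :=
    ((h.commute_zpow_sq_mul_B_C _).zpow_right k).mul_left (Commute.zpow_zpow_self C _ k)
  have hz' := hconj.eq.trans hz.mul_eq
  rw [hC, inv_zpow', mul_assoc A, mul_right_inj] at hz'
  refine ⟨s, mul_left_cancel (a := A ^ (q * i) * B ^ (q * j) * C ^ k) ?_⟩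
  rw [← hz', mul_assoc (_ * _) (C ^ k), ← mul_assoc (C ^ k), ← hcomm.eq]
  simp only [mul_assoc]

theorem zpow_A_eq_one_of_commute_A (h : IsMacdonaldTriple q κ A B C) (hq : Odd q)
    (hκ : IsCoprime κ q) {s j n : ℤ} (hCj : C ^ ((q : ℤ) ^ 2 * j) = 1)
    (hA : Commute (B ^ ((q : ℤ) ^ 2 * (s * j)) * C ^ (-(q * j)) * A ^ n) A) :
    A ^ ((q : ℤ) ^ 2 * j) = 1 := by
  have hQ : Commute (B ^ ((q : ℤ) ^ 2 * (s * j))) A := by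
    have hQA := h.isCentralCommutator_zpow_sq_mul_B_zpow_A hq (s * j) 1
    rw [zpow_one] at hQA
    refine hQA.commute_iff.mpr ?_
    rw [show -((q : ℤ) ^ 2 * (s * j * 1)) = q ^ 2 * j * -s by ring, zpow_mul, hCj, one_zpow]
  have hAC : Commute (A ^ (1 : ℤ)) (C ^ (q * j)) := by
    have hC := hQ.inv_left.mul_left (hA.mul_left (Commute.zpow_self A n).inv_left)
    rw [mul_inv_cancel_right, inv_mul_cancel_left, zpow_neg] at hC
    rw [zpow_one]
    exact (Commute.inv_left_iff.mp hC).symm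
  have hP := (h.isCentralCommutator_zpow_A_zpow_mul_C hq 1 j).commute_iff.mp hAC
  rw [mul_one] at hP
  exact h.zpow_A_eq_one_of_mul hκ hP

theorem zpow_C_eq_one_of_commute_B (h : IsMacdonaldTriple q κ A B C) (hq : Odd q)
    (hκ : IsCoprime κ q) {j k : ℤ} (hBj : B ^ ((q : ℤ) ^ 2 * j) = 1)
    (hk : A ^ ((q : ℤ) ^ 2 * k) = 1)
    (hB : Commute (C ^ (-(q * j)) * A ^ (q * -κ * k)) B) : C ^ (q * k) = 1 := by
  obtain ⟨s, hs⟩ := h.exists_semiconjBy_B_zpow_A hq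
  have hCB : Commute (C ^ (-(q * j))) B := by
    have hBC := h.isCentralCommutator_zpow_B_zpow_mul_C hq 1 (-j)
    rw [zpow_one, mul_neg] at hBC
    refine (hBC.commute_iff.mpr ?_).symm
    rw [show -((q : ℤ) ^ 2 * (κ * 1 * -j)) = q ^ 2 * j * κ by ring, zpow_mul, hBj, one_zpow]
  have hAB : Commute (A ^ (q * (-κ * k))) B := by
    have hA := hCB.inv_left.mul_left hB
    rwa [inv_mul_cancel_left, mul_assoc] at hA
  have hconj := (hs (-κ * k)).eq
  rw [show (q : ℤ) ^ 2 * (s * (-κ * k)) = q ^ 2 * k * (s * -κ) by ring, zpow_mul _ (_ * k), hk,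
    one_zpow, mul_one, hAB.eq, mul_right_inj, mul_eq_left] at hconj
  rw [← Subgroup.mem_bot]
  refine zpow_mem_of_isCoprime (hκ.neg_left.pow_right (n := 2)) ?_ ?_
  · exact h.zpow_C_eq_one hq ⟨k, by ring⟩
  · rw [Subgroup.mem_bot, mul_left_comm, hconj]

theorem zpow_mul_zpow_mul_zpow_pow_eq_one (h : IsMacdonaldTriple q κ A B C) (hq : Odd q)
    {i j k : ℤ} (hAi : A ^ ((q : ℤ) ^ 2 * i) = 1) (hBj : B ^ ((q : ℤ) ^ 2 * j) = 1)
    (hCi : C ^ ((q : ℤ) ^ 2 * i) = 1) (hCk : C ^ (q * k) = 1) :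
    (A ^ (q * i) * B ^ (q * j) * C ^ k) ^ q = 1 := by
  have hAB : Commute (A ^ (q * i)) (B ^ (q * j)) := by
    refine (h.isCentralCommutator_zpow_mul_A_zpow_mul_B hq i j).commute_iff.mpr ?_
    rw [← mul_assoc, zpow_mul, hCi, one_zpow]
  have hAC : Commute (A ^ (q * i)) (C ^ k) := by
    refine (h.isCentralCommutator_zpow_mul_A_zpow_C i k).commute_iff.mpr ?_
    rw [show (q : ℤ) ^ 2 * (κ * i * k) = q ^ 2 * i * (κ * k) by ring, zpow_mul, hAi, one_zpow]
  have hBC : Commute (B ^ (q * j)) (C ^ k) := by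
    refine (h.isCentralCommutator_zpow_mul_B_zpow_C j k).commute_iff.mpr ?_
    rw [show -((q : ℤ) ^ 2 * (κ * j * k)) = q ^ 2 * j * -(κ * k) by ring, zpow_mul, hBj, one_zpow]
  have hpow : ∀ (x : G) (n : ℤ), (x ^ n) ^ q = x ^ (q * n) := fun x n => by
    rw [← zpow_natCast, ← zpow_mul, mul_comm]
  rw [(hAC.mul_left hBC).mul_pow, hAB.mul_pow, hpow, hpow, hpow, ← mul_assoc, ← mul_assoc,
    ← pow_two, hAi, hBj, hCk, one_mul, one_mul]

theorem mem_macdonaldSubgroup_of_commute {H : Type*} [Group H] {C' : H} {σ : G →* G} {φ : G →* H}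
    (h : IsMacdonaldTriple q κ A B C) (hq : Odd q) (hgen : Subgroup.closure {A, B} = ⊤)
    (hσA : σ A = B) (hσB : σ B = A) (h' : IsMacdonaldTriple q κ (φ A) (φ B) C')
    (hBC : Commute (φ B) C') (hAC : ∀ n : ℤ, Commute (φ A ^ n) C' ↔ (q : ℤ) ∣ n) {u : G}
    (hu : Commute u C) : u ∈ macdonaldSubgroup q A B C := by
  have hσC : σ C = C⁻¹ := h.map_C (by rw [hσA, hσB]; exact h.symm)
  set T : Subgroup G := (Subgroup.centralizer {C'}).comap φ
  have hCT : ∀ x, Commute x C → x ∈ T := fun x hx =>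
    Subgroup.mem_centralizer_singleton_iff.mpr (h.map_C h' ▸ hx.map φ)
  have hBT : B ∈ T := Subgroup.mem_centralizer_singleton_iff.mpr hBC
  have hAT : ∀ n : ℤ, A ^ n ∈ T ↔ (q : ℤ) ∣ n := fun n => by
    rw [Subgroup.mem_comap, map_zpow, Subgroup.mem_centralizer_singleton_iff, ← hAC n]
    rfl
  have hKT : macdonaldSubgroup q A B C ≤ T := by
    rw [macdonaldSubgroup, Subgroup.closure_le]
    rintro x (rfl | rfl | rfl)
    · exact_mod_cast (hAT q).mpr dvd_rfl
    · exact pow_mem hBT q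
    · exact hCT _ (Commute.refl _)
  have hKσ : macdonaldSubgroup q A B C ≤ (macdonaldSubgroup q A B C).comap σ := by
    rw [← Subgroup.map_le_iff_le_comap, macdonaldSubgroup, MonoidHom.map_closure,
      Set.image_insert_eq, Set.image_pair, map_pow, map_pow, hσA, hσB, hσC]
    exact macdonaldSubgroup_symm.le
  have huT : u ∈ T := hCT u hu
  have huσ : σ u ∈ T := hCT _ (Commute.inv_right_iff.mp (hσC ▸ hu.map σ))
  obtain ⟨i, j, x, hx, rfl⟩ := exists_zpow_mul_zpow_mul_of_closure_pair hgen u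
  have hxK := h.commutator_le_macdonaldSubgroup hq hgen hx
  obtain ⟨i, rfl⟩ : (q : ℤ) ∣ i := by
    rw [T.mul_mem_cancel_right (hKT hxK), T.mul_mem_cancel_right (zpow_mem hBT j)] at huT
    exact (hAT i).mp huT
  obtain ⟨j, rfl⟩ : (q : ℤ) ∣ j := by
    rw [map_mul, map_mul, map_zpow, map_zpow, hσA, hσB, T.mul_mem_cancel_right (hKT (hKσ hxK)),
      T.mul_mem_cancel_left (zpow_mem hBT _)] at huσ
    exact (hAT j).mp huσ
  exact mul_mem (mul_mem (zpow_A_mem i) (zpow_B_mem j)) hxK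

theorem pow_eq_one_of_mem (h : IsMacdonaldTriple q κ A B C) (hq : Odd q)
    (hκ : IsCoprime κ q) (hAB : ∀ n : ℤ, A ^ n = 1 → B ^ n = 1) {u : G}
    (huK : u ∈ macdonaldSubgroup q A B C) (hu : u ∈ Subgroup.upperCentralSeries G 2) :
    u ^ q = 1 := by
  obtain ⟨i, j, k, rfl⟩ := h.exists_of_mem_macdonaldSubgroup hq huK
  obtain ⟨huC, huA⟩ :=
    h.commute_C_and_zpow_A_of_mem_centralizer_commutator hκ
      (upperCentralSeries_two_le_centralizer_commutator hu)
  have hPQ := h.zpow_A_eq_zpow_B_of_commute_C hq hκ huC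
  obtain ⟨hCi, hCj, hk⟩ := h.zpow_eq_one_of_commute_zpow_A hq hκ huA hPQ
  obtain ⟨z, hz, hzA⟩ := exists_isCentralCommutator_of_mem_upperCentralSeries_two hu A
  obtain ⟨s, rfl⟩ := h.exists_eq_of_isCentralCommutator_A hq hzA hk
  have hAj := h.zpow_A_eq_one_of_commute_A hq hκ hCj (Subgroup.mem_center_iff.mp hz A).symm
  have hBj := hAB _ hAj
  have hCk : C ^ (q * k) = 1 := by
    refine h.zpow_C_eq_one_of_commute_B hq hκ hBj hk ?_
    rw [show (q : ℤ) ^ 2 * (s * j) = q ^ 2 * j * s by ring, zpow_mul B, hBj, one_zpow,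
      one_mul] at hz
    exact (Subgroup.mem_center_iff.mp hz B).symm
  exact h.zpow_mul_zpow_mul_zpow_pow_eq_one hq (hPQ.trans hBj) hBj hCi hCk

end IsMacdonaldTriple

section Model

variable {R M : Type*} [CommRing R] [AddCommGroup M] [Module R M]

theorem map_mul_map_eq_zero (ι : M →ₗ[R] R) {y e : M} (he : ι y • e = 0) : ι y * ι e = 0 := by
  rw [← smul_eq_mul, ← map_smul, he, map_zero]

/-- The image of `A` in the permutation model of a Macdonald triple on `R × M`. -/
def macdonaldModelA (ι : M →ₗ[R] R) (κ : R) : Equiv.Perm (R × M) where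
  toFun v := (v.1 - 1 + κ * ι v.2, v.2)
  invFun v := (v.1 + 1 - κ * ι v.2, v.2)
  left_inv v := by ext <;> ring_nf
  right_inv v := by ext <;> ring_nf

/-- The image of `B` in the permutation model of a Macdonald triple on `R × M`; here `c` plays the
role of `κ / 2` and `ι e` that of `q`. -/
def macdonaldModelB (ι : M →ₗ[R] R) {e : M} (he : ι e • e = 0) (c : R) : Equiv.Perm (R × M) where
  toFun v := (v.1 + c * (v.1 * (v.1 - 1)) * ι e, v.2 - v.1 • e)
  invFun v := (v.1 - c * (v.1 * (v.1 - 1)) * ι e, v.2 + v.1 • e)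
  left_inv v := by
    have hιe := map_mul_map_eq_zero ι he
    ext
    · simp only
      linear_combination (-c ^ 2 * v.1 * (v.1 - 1) *
        (2 * v.1 - 1 + c * (v.1 * (v.1 - 1)) * ι e)) * hιe
    · simp [add_smul, mul_smul, he]
  right_inv v := by
    have hιe := map_mul_map_eq_zero ι he
    ext
    · simp only
      linear_combination (-c ^ 2 * v.1 * (v.1 - 1) *
        (2 * v.1 - 1 - c * (v.1 * (v.1 - 1)) * ι e)) * hιe
    · simp [sub_smul, mul_smul, he]

/-- The image of `C` in the permutation model of a Macdonald triple on `R × M`. -/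
def macdonaldModelC (e : M) : Equiv.Perm (R × M) where
  toFun v := (v.1, v.2 - e)
  invFun v := (v.1, v.2 + e)
  left_inv v := by simp
  right_inv v := by simp

theorem macdonaldModelA_zpow_apply (ι : M →ₗ[R] R) (κ : R) (n : ℤ) (v : R × M) :
    (macdonaldModelA ι κ ^ n) v = (v.1 + n * (κ * ι v.2 - 1), v.2) := by
  induction n with
  | zero => simp
  | succ n ih =>
    rw [zpow_add_one, ← (Commute.self_zpow _ _).eq, Equiv.Perm.mul_apply, ih]
    ext
    · simp only [macdonaldModelA, Equiv.coe_fn_mk]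
      push_cast
      ring
    · rfl
  | pred n ih =>
    rw [zpow_sub_one, ← (Commute.self_zpow _ _).inv_left.eq, Equiv.Perm.mul_apply, ih]
    ext
    · simp only [macdonaldModelA, Equiv.Perm.inv_def, Equiv.coe_fn_symm_mk]
      push_cast
      ring
    · rfl

theorem macdonaldModelB_pow_apply (ι : M →ₗ[R] R) {e : M} (he : ι e • e = 0) (c : R) (n : ℕ)
    (v : R × M) :
    (macdonaldModelB ι he c ^ n) v =
      (v.1 + n * (c * (v.1 * (v.1 - 1)) * ι e), v.2 - (n * v.1) • e) := by
  have hιe := map_mul_map_eq_zero ι he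
  induction n with
  | zero => simp
  | succ n ih =>
    rw [pow_succ', Equiv.Perm.mul_apply, ih]
    ext
    · simp only [macdonaldModelB, Equiv.coe_fn_mk]
      push_cast
      linear_combination (c ^ 2 * v.1 * (v.1 - 1) * n *
        (2 * v.1 - 1 + n * c * (v.1 * (v.1 - 1)) * ι e)) * hιe
    · simp only [macdonaldModelB, Equiv.coe_fn_mk, add_smul, mul_smul, he, smul_zero, add_zero,
        Nat.cast_add_one, one_smul]
      abel

theorem macdonaldModelA_pow_eq_one (ι : M →ₗ[R] R) (κ : R) {n : ℕ} (hn : (n : R) = 0) :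
    macdonaldModelA ι κ ^ n = 1 := by
  ext1 v
  rw [← zpow_natCast, macdonaldModelA_zpow_apply, Int.cast_natCast, hn, zero_mul, add_zero]
  rfl

theorem macdonaldModelB_pow_eq_one (ι : M →ₗ[R] R) {e : M} (he : ι e • e = 0) (c : R) {n : ℕ}
    (hn : (n : R) = ι e) : macdonaldModelB ι he c ^ n = 1 := by
  have hιe := map_mul_map_eq_zero ι he
  ext1 v
  rw [macdonaldModelB_pow_apply, hn, mul_comm (ι e) (_ * _), mul_assoc, hιe, mul_zero, add_zero,
    mul_comm (ι e), mul_smul, he, smul_zero, sub_zero]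
  rfl

theorem isMacdonaldTriple_macdonaldModel (ι : M →ₗ[R] R) {e : M} (he : ∀ y, ι y • e = 0)
    {c : R} {q : ℕ} {κ : ℤ} (hq : (q : R) = ι e) (hc : 2 * c = κ) :
    IsMacdonaldTriple q κ (macdonaldModelA ι κ) (macdonaldModelB ι (he e) c)
      (macdonaldModelC e) where
  conj_B_A := by
    have hιe := fun y => map_mul_map_eq_zero ι (he y)
    ext1 v
    ext
    · simp only [Equiv.Perm.mul_apply, macdonaldModelA, macdonaldModelB, macdonaldModelC,
        Equiv.coe_fn_mk, map_sub, map_smul, smul_eq_mul]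
      linear_combination c * κ * (2 * v.1 - 3 + κ * (ι v.2 - ι e)) * (hιe v.2 - hιe e) -
        (v.1 - 1) * ι e * hc
    · simp only [Equiv.Perm.mul_apply, macdonaldModelA, macdonaldModelB, macdonaldModelC,
        Equiv.coe_fn_mk, map_sub, add_smul, sub_smul, one_smul, mul_smul, he, sub_zero, smul_zero,
        add_zero]
      abel
  conj_C_A := by
    ext1 v
    rw [Equiv.Perm.mul_apply, macdonaldModelA_zpow_apply]
    ext
    · simp only [Equiv.Perm.mul_apply, macdonaldModelA, macdonaldModelC, Equiv.coe_fn_mk, map_sub]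
      push_cast
      rw [hq]
      have hιe := map_mul_map_eq_zero ι (he v.2)
      linear_combination (κ : R) ^ 2 * hιe
    · rfl
  conj_C_B := by
    have hκ : macdonaldModelB ι (he e) c ^ (1 + κ * q : ℤ) = macdonaldModelB ι (he e) c := by
      rw [zpow_one_add, mul_comm κ, zpow_mul, zpow_natCast,
        macdonaldModelB_pow_eq_one ι (he e) c hq, one_zpow, mul_one]
    rw [hκ]
    ext1 v
    ext
    · rfl
    · simp only [Equiv.Perm.mul_apply, macdonaldModelB, macdonaldModelC, Equiv.coe_fn_mk]
      abel
  pow_A := macdonaldModelA_pow_eq_one ι _ (by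
    rw [Nat.cast_pow, hq, pow_succ, pow_two, map_mul_map_eq_zero ι (he e), zero_mul])
  pow_B := by
    rw [pow_succ', pow_mul, macdonaldModelB_pow_eq_one ι (he e) c hq, one_pow]

theorem commute_macdonaldModelA_zpow_macdonaldModelC_iff (ι : M →ₗ[R] R) (κ : R) (e : M) (n : ℤ) :
    Commute (macdonaldModelA ι κ ^ n) (macdonaldModelC e) ↔ n * κ * ι e = 0 := by
  have happly (v : R × M) :
      (macdonaldModelA ι κ ^ n * macdonaldModelC e : Equiv.Perm (R × M)) v =
        (macdonaldModelC e * macdonaldModelA ι κ ^ n : Equiv.Perm (R × M)) v ↔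
      n * κ * ι e = 0 := by
    rw [Equiv.Perm.mul_apply, Equiv.Perm.mul_apply, macdonaldModelA_zpow_apply,
      macdonaldModelA_zpow_apply]
    simp only [macdonaldModelC, Equiv.coe_fn_mk, map_sub, Prod.mk.injEq, and_true, add_right_inj]
    rw [← sub_eq_zero, ← neg_eq_zero]
    ring_nf
  rw [commute_iff_eq, Equiv.ext_iff]
  exact ⟨fun hcomm => (happly 0).mp (hcomm 0), fun he v => (happly v).mpr he⟩

theorem commute_macdonaldModelB_macdonaldModelC (ι : M →ₗ[R] R) {e : M} (he : ι e • e = 0) (c : R) :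
    Commute (macdonaldModelB ι he c) (macdonaldModelC e) := by
  ext1 v
  ext
  · rfl
  · simp only [Equiv.Perm.mul_apply, macdonaldModelB, macdonaldModelC, Equiv.coe_fn_mk]
    abel

end Model

theorem exists_isMacdonaldTriple_commute_zpow_iff {q : ℕ} {κ : ℤ} (hq : Odd q)
    (hκ : IsCoprime κ q) :
    ∃ (H : Type) (_ : Group H) (A B C : H), IsMacdonaldTriple q κ A B C ∧ Commute B C ∧
      ∀ n : ℤ, Commute (A ^ n) C ↔ (q : ℤ) ∣ n := by
  have hqq : (q : ZMod (q ^ 2)) * q = 0 := by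
    rw [← Nat.cast_mul, ← pow_two, ZMod.natCast_self]
  obtain ⟨c, hc⟩ : ∃ c : ZMod (q ^ 2), 2 * c = κ := by
    have htwo : IsUnit ((2 : ℕ) : ZMod (q ^ 2)) :=
      (ZMod.isUnit_iff_coprime 2 (q ^ 2)).mpr (Nat.coprime_two_left.mpr hq.pow)
    obtain ⟨c, hc⟩ := htwo.dvd (a := (κ : ZMod (q ^ 2)))
    exact ⟨c, hc.symm⟩
  let M := Submodule.torsionBy (ZMod (q ^ 2)) (ZMod (q ^ 2)) q
  let e : M := ⟨q, hqq⟩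
  have he : ∀ y : M, M.subtype y • e = 0 := fun y =>
    Subtype.ext ((mul_comm _ _).trans y.2)
  refine ⟨_, _, _, _, _, isMacdonaldTriple_macdonaldModel M.subtype he rfl hc,
    commute_macdonaldModelB_macdonaldModelC M.subtype (he e) c, fun n => ?_⟩
  rw [commute_macdonaldModelA_zpow_macdonaldModelC_iff]
  have hdvd : (n * κ * M.subtype e : ZMod (q ^ 2)) = 0 ↔ (q : ℤ) * q ∣ n * κ * q := by
    rw [← Nat.cast_mul, ← pow_two, ← ZMod.intCast_zmod_eq_zero_iff_dvd]
    push_cast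
    rfl
  rw [hdvd, mul_dvd_mul_iff_right (by exact_mod_cast hq.pos.ne')]
  exact ⟨hκ.symm.dvd_of_dvd_mul_right, fun h => h.mul_right κ⟩

namespace JGroup

theorem lift_eq_one_of_mem_jRels {H : Type*} [Group H] {p m : ℕ} {k : ℤ} {A B C : H}
    (h : IsMacdonaldTriple (p ^ m) k A B C) :
    ∀ x ∈ jRels p m (1 + k * (p : ℤ) ^ m), (FreeGroup.lift ![A, B]) x = 1 := by
  have hC := h.eq_commutator
  have hA := h.conj_C_A.eq
  have hB := h.conj_C_B.eq
  push_cast at hA hB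
  rintro x (rfl | rfl | rfl | rfl)
  · simp only [map_mul, map_inv, map_zpow, FreeGroup.lift_apply_of, Matrix.cons_val_zero,
      Matrix.cons_val_one, ← hC]
    rw [mul_assoc C⁻¹, ← hA, inv_mul_cancel_left, mul_inv_cancel]
  · simp only [map_mul, map_inv, map_zpow, FreeGroup.lift_apply_of, Matrix.cons_val_zero,
      Matrix.cons_val_one, ← hC]
    rw [hB, mul_inv_cancel_right, mul_inv_cancel]
  · simpa [mul_comm 3, pow_mul] using h.pow_A
  · simpa [mul_comm 3, pow_mul] using h.pow_B

theorem exists_monoidHom {H : Type*} [Group H] {p m : ℕ} {k : ℤ} {A B C : H}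
    (h : IsMacdonaldTriple (p ^ m) k A B C) :
    ∃ φ : JGroup p m (1 + k * (p : ℤ) ^ m) →* H,
      φ (PresentedGroup.of 0) = A ∧ φ (PresentedGroup.of 1) = B :=
  ⟨PresentedGroup.toGroup (lift_eq_one_of_mem_jRels h), by simp, by simp⟩

theorem exists_isMacdonaldTriple (p m : ℕ) (k : ℤ) :
    ∃ C : JGroup p m (1 + k * (p : ℤ) ^ m),
      IsMacdonaldTriple (p ^ m) k (PresentedGroup.of 0) (PresentedGroup.of 1) C := by
  set A : JGroup p m (1 + k * (p : ℤ) ^ m) := PresentedGroup.of 0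
  set B : JGroup p m (1 + k * (p : ℤ) ^ m) := PresentedGroup.of 1
  have hA : (A⁻¹ * B⁻¹ * A * B)⁻¹ * A * (A⁻¹ * B⁻¹ * A * B) = A ^ (1 + k * (p : ℤ) ^ m) :=
    mul_inv_eq_one.mp (PresentedGroup.one_of_mem (Or.inl rfl))
  have hB : (A⁻¹ * B⁻¹ * A * B) * B * (A⁻¹ * B⁻¹ * A * B)⁻¹ = B ^ (1 + k * (p : ℤ) ^ m) :=
    mul_inv_eq_one.mp (PresentedGroup.one_of_mem (Or.inr (Or.inl rfl)))
  have hA3 : A ^ p ^ (3 * m) = 1 := PresentedGroup.one_of_mem (Or.inr (Or.inr (Or.inl rfl)))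
  have hB3 : B ^ p ^ (3 * m) = 1 := PresentedGroup.one_of_mem (Or.inr (Or.inr (Or.inr rfl)))
  rw [mul_comm 3, pow_mul] at hA3 hB3
  refine ⟨A⁻¹ * B⁻¹ * A * B, ?_, ?_, ?_, hA3, hB3⟩
  · rw [SemiconjBy]
    group
  · rw [SemiconjBy, Nat.cast_pow, ← hA, mul_assoc (_⁻¹) A, mul_inv_cancel_left]
  · rw [SemiconjBy, Nat.cast_pow, ← hB, inv_mul_cancel_right]

theorem closure_pair_eq_top (p m : ℕ) (α : ℤ) :
    Subgroup.closure {(PresentedGroup.of 0 : JGroup p m α), PresentedGroup.of 1} = ⊤ := by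
  rw [← PresentedGroup.closure_range_of]
  congr 1
  ext x
  simp [eq_comm]

end JGroup

theorem JGroup_pow_mul_central_general (p m : ℕ) (hodd : Odd p) (k : ℤ)
    (hk : IsCoprime k (p : ℤ)) :
    ∀ u ∈ Subgroup.upperCentralSeries (JGroup p m (1 + k * (p : ℤ) ^ m)) 2,
      ∀ y, (y * u) ^ (p ^ m) = y ^ (p ^ m) := by
  intro u hu y
  have hq : Odd (p ^ m) := hodd.pow
  have hkq : IsCoprime k ((p ^ m : ℕ) : ℤ) := by
    rw [Nat.cast_pow]
    exact hk.pow_right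
  obtain ⟨C, h⟩ := JGroup.exists_isMacdonaldTriple p m k
  obtain ⟨σ, hσA, hσB⟩ := JGroup.exists_monoidHom h.symm
  obtain ⟨H, _, A', B', C', h', hBC, hAC⟩ := exists_isMacdonaldTriple_commute_zpow_iff hq hkq
  obtain ⟨φ, rfl, rfl⟩ := JGroup.exists_monoidHom h'
  obtain ⟨huC, -⟩ :=
    h.commute_C_and_zpow_A_of_mem_centralizer_commutator hkq
      (upperCentralSeries_two_le_centralizer_commutator hu)
  have huK := h.mem_macdonaldSubgroup_of_commute hq (JGroup.closure_pair_eq_top p m _) hσA hσB h'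
    hBC hAC huC
  have huq := h.pow_eq_one_of_mem hq hkq
    (fun n hn => by rw [← hσA, ← map_zpow, hn, map_one]) huK hu
  exact mul_pow_of_mem_upperCentralSeries_two hu hq huq y

theorem JGroup_pow_mul_central (p m : ℕ) (hp : p.Prime) (hodd : Odd p) (hm : 1 ≤ m)
    (k α : ℤ) (hk : ¬ (p : ℤ) ∣ k) (hαk : α = 1 + k * (p : ℤ) ^ m) :
    let A : JGroup p m α := PresentedGroup.of 0
    let B : JGroup p m α := PresentedGroup.of 1
    ∀ u : JGroup p m α, u ∈ upperCentralSeries (JGroup p m α) 2 →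
      (A * u) ^ (p ^ m) = A ^ (p ^ m) ∧ (B * u) ^ (p ^ m) = B ^ (p ^ m) := by
  subst hαk
  intro A B u hu
  have hcop := ((Nat.prime_iff_prime_int.mp hp).coprime_iff_not_dvd.mpr hk).symm
  exact ⟨JGroup_pow_mul_central_general p m hodd k hcop u hu A,
    JGroup_pow_mul_central_general p m hodd k hcop u hu B⟩
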